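/- Let s ≥ 1 be an integer, set r = 2s, and let 𝒜, ℬ be the canonical matrices of size 2r+2 associated to the balanced partition (s, s). Then the ℂ-vector space 𝔤(𝒜,ℬ) of complex (2r+2)×(2r+2) matrices X such that both Xᵀ𝒜 + 𝒜X and Xᵀℬ + ℬX lie in the ℂ-linear span of {𝒜, ℬ} has dimension 2s + 8 = r + 8 over ℂ. -/

import Mathlib

open Matrix

/-- Index type of the canonical pencil associated to the partition `rr`:
pairs `(i, p)` with `i : Fin h` and `0 ≤ p ≤ 2 rᵢ`. -/
abbrev PencilIdx (h : ℕ) (rr : Fin h → ℕ) := (i : Fin h) × Fin (2 * rr i + 1)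

/-- The first canonical matrix `𝒜` of the pencil `L_{(r₁,…,r_h)}`. -/
def canA (h : ℕ) (rr : Fin h → ℕ) : Matrix (PencilIdx h rr) (PencilIdx h rr) ℂ :=
  Matrix.of fun u v =>
    if u.1 = v.1 ∧
        (((v.2 : ℕ) = (u.2 : ℕ) + rr u.1 ∧ (u.2 : ℕ) < rr u.1) ∨
         ((u.2 : ℕ) = (v.2 : ℕ) + rr u.1 ∧ (v.2 : ℕ) < rr u.1)) then 1 else 0

/-- The second canonical matrix `ℬ` of the pencil `L_{(r₁,…,r_h)}`. -/
def canB (h : ℕ) (rr : Fin h → ℕ) : Matrix (PencilIdx h rr) (PencilIdx h rr) ℂ :=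
  Matrix.of fun u v =>
    if u.1 = v.1 ∧
        (((v.2 : ℕ) = (u.2 : ℕ) + rr u.1 + 1 ∧ (u.2 : ℕ) < rr u.1) ∨
         ((u.2 : ℕ) = (v.2 : ℕ) + rr u.1 + 1 ∧ (v.2 : ℕ) < rr u.1)) then 1 else 0


/-- The ℂ-linear map `X ↦ XᵀM + MX`. -/
noncomputable def congrDeriv {n : Type*} [Fintype n] (M : Matrix n n ℂ) :
    Matrix n n ℂ →ₗ[ℂ] Matrix n n ℂ where
  toFun X := Xᵀ * M + M * X
  map_add' X Y := by
    simp only [Matrix.transpose_add, Matrix.add_mul, Matrix.mul_add]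
    abel
  map_smul' c X := by
    simp only [Matrix.transpose_smul, Matrix.smul_mul, Matrix.mul_smul, smul_add,
      RingHom.id_apply]

/-- The Lie algebra `𝔤(A,B)` of the stabilizer of the pencil spanned by `A` and `B`,
as a ℂ-subspace of the space of matrices: all `X` such that `XᵀA + AX` and
`XᵀB + BX` lie in the span of `{A, B}`. -/
noncomputable def stabAlg {n : Type*} [Fintype n] (A B : Matrix n n ℂ) :
    Submodule ℂ (Matrix n n ℂ) :=
  Submodule.comap (congrDeriv A) (Submodule.span ℂ {A, B}) ⊓
  Submodule.comap (congrDeriv B) (Submodule.span ℂ {A, B})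

/-!
The canonical pencil of `(s, …, s)` with `h` parts is the sum of `h` copies of the pencil of
symmetric matrices with off-diagonal blocks `x` and `y`, the multiplication maps from binary forms
of degree `s - 1` to binary forms of degree `s`. The derivations of binary forms induced by
`2 × 2` matrices lift the whole of `gl₂`, so `stabAlg` acts on the pencil through all of `gl₂`, and
its dimension exceeds by `4` that of the kernel of the action. An element of the kernel is computed
one pair of blocks `(i, j)`, `(j, i)` at a time: its diagonal parts commute with multiplication by
`x` and `y`, hence are scalars, which gives an `h × h` matrix; of its off-diagonal parts one
vanishes, and the other is a Hankel matrix with `2 s` parameters, skew under exchange of `i` and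
`j`. The kernel therefore has dimension `h ^ 2 + 2 s * (h choose 2)`.
-/

section LinearAlgebra

theorem finrank_comap_of_le_range {K V W : Type*} [DivisionRing K] [AddCommGroup V] [Module K V]
    [FiniteDimensional K V] [AddCommGroup W] [Module K W] (f : V →ₗ[K] W) {p : Submodule K W}
    (hp : p ≤ LinearMap.range f) :
    Module.finrank K (p.comap f) = Module.finrank K p + Module.finrank K (LinearMap.ker f) := by
  have hrange : LinearMap.range (f.domRestrict (p.comap f)) = p := by
    rw [LinearMap.range_domRestrict, Submodule.map_comap_eq_of_le hp]
  have hker : LinearMap.ker (f.domRestrict (p.comap f)) =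
      (LinearMap.ker f).submoduleOf (p.comap f) := rfl
  have hle : LinearMap.ker f ≤ p.comap f := Submodule.comap_mono bot_le
  rw [← LinearMap.finrank_range_add_finrank_ker (f.domRestrict (p.comap f)), hrange, hker,
    (Submodule.submoduleOfEquivOfLe hle).finrank_eq]

theorem finrank_prod_submodule {K V W : Type*} [DivisionRing K] [AddCommGroup V] [Module K V]
    [FiniteDimensional K V] [AddCommGroup W] [Module K W] [FiniteDimensional K W]
    (p : Submodule K V) (q : Submodule K W) :
    Module.finrank K (p.prod q) = Module.finrank K p + Module.finrank K q := by
  have hrange : LinearMap.range (p.subtype.prodMap q.subtype) = p.prod q := by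
    rw [LinearMap.range_prodMap, p.range_subtype, q.range_subtype]
  rw [← hrange, LinearMap.finrank_range_of_inj
    (p.injective_subtype.prodMap q.injective_subtype), Module.finrank_prod]

theorem finrank_so {ι K : Type*} [Fintype ι] [LinearOrder ι] [Field K] [NeZero (2 : K)] :
    Module.finrank K (LieAlgebra.Orthogonal.so ι K) = (Fintype.card ι).choose 2 := by
  let upper : LieAlgebra.Orthogonal.so ι K →ₗ[K] ({x : ι × ι // x.1 < x.2} → K) :=
    { toFun := fun M x => M.1 x.1.1 x.1.2
      map_add' := fun _ _ => rfl
      map_smul' := fun _ _ => rfl }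
  have skew (M : LieAlgebra.Orthogonal.so ι K) (i j : ι) : M.1 j i = -M.1 i j :=
    congr_fun₂ ((LieAlgebra.Orthogonal.mem_so ι K M.1).1 M.2) i j
  have upper_injective : Function.Injective upper := by
    intro M N h
    have heq_of_lt {i j : ι} (hij : i < j) : M.1 i j = N.1 i j := congrFun h ⟨(i, j), hij⟩
    ext i j
    rcases lt_trichotomy i j with hij | rfl | hij
    · exact heq_of_lt hij
    · have diag_eq_zero (L : LieAlgebra.Orthogonal.so ι K) : L.1 i i = 0 := by
        have : (2 : K) * L.1 i i = 0 := by linear_combination skew L i i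
        simpa [NeZero.ne] using this
      rw [diag_eq_zero, diag_eq_zero]
    · rw [skew M j i, skew N j i, heq_of_lt hij]
  have upper_surjective : Function.Surjective upper := by
    intro v
    let M : Matrix ι ι K := of fun i j =>
      if hij : i < j then v ⟨(i, j), hij⟩ else if hji : j < i then -v ⟨(j, i), hji⟩ else 0
    have hM : Mᵀ = -M := by
      ext i j
      rcases lt_trichotomy i j with hij | rfl | hij <;> simp [M, *, not_lt_of_gt]
    refine ⟨⟨M, (LieAlgebra.Orthogonal.mem_so ι K M).2 hM⟩, ?_⟩
    ext ⟨⟨i, j⟩, hij⟩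
    exact dif_pos hij
  rw [(LinearEquiv.ofBijective upper ⟨upper_injective, upper_surjective⟩).finrank_eq,
    Module.finrank_fintype_fun_eq_card, Fintype.card_subtype, Fintype.card_product_filter_lt]

end LinearAlgebra

section Stabilizer

variable {m n : Type*} [Fintype m] [Fintype n]

/-- The Lie algebra of the joint isometry group of `A` and `B`, i.e. the kernel of the action of
`stabAlg A B` on the pencil. -/
noncomputable def isometryAlg (A B : Matrix n n ℂ) : Submodule ℂ (Matrix n n ℂ) :=
  LinearMap.ker ((congrDeriv A).prod (congrDeriv B))

theorem mem_isometryAlg {A B X : Matrix n n ℂ} :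
    X ∈ isometryAlg A B ↔ congrDeriv A X = 0 ∧ congrDeriv B X = 0 := by
  simp [isometryAlg]

theorem stabAlg_eq_comap (A B : Matrix n n ℂ) :
    stabAlg A B = ((Submodule.span ℂ {A, B}).prod (Submodule.span ℂ {A, B})).comap
      ((congrDeriv A).prod (congrDeriv B)) :=
  rfl

theorem finrank_stabAlg_of_full_action {A B : Matrix n n ℂ} (hAB : LinearIndependent ℂ ![A, B])
    (hfull : ∀ M : Matrix (Fin 2) (Fin 2) ℂ, ∃ X,
      congrDeriv A X = M 0 0 • A + M 0 1 • B ∧ congrDeriv B X = M 1 0 • A + M 1 1 • B) :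
    Module.finrank ℂ (stabAlg A B) = Module.finrank ℂ (isometryAlg A B) + 4 := by
  have hspan : Module.finrank ℂ (Submodule.span ℂ {A, B}) = 2 := by
    have hrange : Set.range ![A, B] = {A, B} := by
      simp [range_cons, range_empty, Set.pair_comm B A]
    rw [← hrange, finrank_span_eq_card hAB, Fintype.card_fin]
  have hle : (Submodule.span ℂ {A, B}).prod (Submodule.span ℂ {A, B}) ≤
      LinearMap.range ((congrDeriv A).prod (congrDeriv B)) := by
    rintro ⟨Y, Z⟩ ⟨hY, hZ⟩
    obtain ⟨a, b, rfl⟩ := Submodule.mem_span_pair.1 hY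
    obtain ⟨c, d, rfl⟩ := Submodule.mem_span_pair.1 hZ
    obtain ⟨X, hA, hB⟩ := hfull !![a, b; c, d]
    exact ⟨X, Prod.ext hA hB⟩
  rw [stabAlg_eq_comap, finrank_comap_of_le_range _ hle, finrank_prod_submodule, hspan,
    isometryAlg, add_comm]

theorem congrDeriv_submatrix (e : m ≃ n) (M X : Matrix n n ℂ) :
    congrDeriv (M.submatrix e e) (X.submatrix e e) = (congrDeriv M X).submatrix e e := by
  simp [congrDeriv, submatrix_mul_equiv, submatrix_add]

theorem finrank_stabAlg_submatrix (e : m ≃ n) (A B : Matrix n n ℂ) :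
    Module.finrank ℂ (stabAlg (A.submatrix e e) (B.submatrix e e)) =
      Module.finrank ℂ (stabAlg A B) := by
  let L : Matrix n n ℂ ≃ₗ[ℂ] Matrix m m ℂ := reindexLinearEquiv ℂ ℂ e.symm e.symm
  have mem_span_iff (Y : Matrix n n ℂ) :
      L Y ∈ Submodule.span ℂ {L A, L B} ↔ Y ∈ Submodule.span ℂ {A, B} := by
    simp only [Submodule.mem_span_pair, ← map_smul, ← map_add, L.injective.eq_iff]
  have hcomap : (stabAlg (L A) (L B)).comap (L : Matrix n n ℂ →ₗ[ℂ] Matrix m m ℂ) =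
      stabAlg A B := by
    ext X
    have congrDeriv_L (M : Matrix n n ℂ) : congrDeriv (L M) (L X) = L (congrDeriv M X) :=
      congrDeriv_submatrix e M X
    simp [stabAlg, congrDeriv_L, mem_span_iff]
  change Module.finrank ℂ (stabAlg (L A) (L B)) = _
  rw [← hcomap, (L.ofSubmodule' _).finrank_eq]

end Stabilizer

section HankelToeplitz

variable {α : Type*} {n : ℕ}

/-- The `(n + 1) × n` Hankel matrix with entries `f (q + p)`; its `2 n` antidiagonals exhaust the
indices of `f`. -/
def hankel (f : Fin (2 * n) → α) : Matrix (Fin (n + 1)) (Fin n) α :=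
  of fun q p => f ⟨q + p, by omega⟩

theorem hankel_neg [Neg α] (f : Fin (2 * n) → α) : hankel (-f) = -hankel f :=
  rfl

theorem hankel_injective : Function.Injective (hankel : (Fin (2 * n) → α) → _) := by
  intro f g h
  ext k
  have := congr_fun₂ h ⟨min k n, by omega⟩ ⟨k - n, by omega⟩
  simpa [hankel, show min (k : ℕ) n + (k - n) = k by omega] using this

theorem exists_eq_hankel {M : Matrix (Fin (n + 1)) (Fin n) α}
    (hM : ∀ (q p : ℕ) (hq : q < n) (hp : p + 1 < n),
      M ⟨q + 1, by omega⟩ ⟨p, by omega⟩ = M ⟨q, by omega⟩ ⟨p + 1, hp⟩) :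
    ∃ f, M = hankel f := by
  refine ⟨fun k => M ⟨min k n, by omega⟩ ⟨k - n, by omega⟩, ?_⟩
  have slide (p : ℕ) : ∀ (q : ℕ) (hq : q < n + 1) (hp : p < n),
      M ⟨q, hq⟩ ⟨p, hp⟩ = M ⟨min (q + p) n, by omega⟩ ⟨q + p - n, by omega⟩ := by
    induction p with
    | zero => intro q hq hp; congr! 2 <;> omega
    | succ p ih =>
      intro q hq hp
      rcases Nat.lt_succ_iff_lt_or_eq.1 hq with hq | rfl
      · rw [← hM q p hq hp, ih]
        congr! 2 <;> omega
      · congr! 2 <;> omega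
  ext q p
  exact slide p q q.2 p.2

theorem eq_smul_one_of_toeplitz [Semiring α] {T : Matrix (Fin (n + 1)) (Fin (n + 1)) α}
    (hT : ∀ p q : Fin n, T p.succ q.succ = T p.castSucc q.castSucc)
    (hlast : ∀ p : Fin n, T p.castSucc (Fin.last n) = 0) (hzero : ∀ p : Fin n, T p.succ 0 = 0) :
    T = T 0 0 • 1 := by
  have diag (p : Fin (n + 1)) : T p p = T 0 0 := by
    induction p using Fin.induction with
    | zero => rfl
    | succ p ih => rw [hT, ih]
  have below (q : Fin (n + 1)) : ∀ p, q < p → T p q = 0 := by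
    induction q using Fin.induction with
    | zero =>
      intro p hp
      obtain ⟨p, rfl⟩ := Fin.exists_succ_eq_of_ne_zero hp.ne'
      exact hzero p
    | succ q ih =>
      intro p hp
      obtain ⟨p, rfl⟩ := Fin.exists_succ_eq_of_ne_zero (Fin.ne_zero_of_lt hp)
      rw [hT]
      exact ih _ (by simpa using hp)
  have above (q : Fin (n + 1)) : ∀ p, p < q → T p q = 0 := by
    induction q using Fin.reverseInduction with
    | last =>
      intro p hp
      obtain ⟨p, rfl⟩ := Fin.exists_castSucc_eq.2 hp.ne
      exact hlast p
    | cast q ih =>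
      intro p hp
      obtain ⟨p, rfl⟩ := Fin.exists_castSucc_eq.2 (Fin.ne_last_of_lt hp)
      rw [← hT]
      exact ih _ (by simpa using hp)
  ext p q
  rcases lt_trichotomy p q with hpq | rfl | hpq
  · simp [above q p hpq, hpq.ne]
  · simp [diag]
  · simp [below q p hpq, hpq.ne']

end HankelToeplitz

section BinaryForms

variable {R : Type*} [CommRing R] {n : ℕ}

variable (R n) in
/-- Multiplication by `x` from binary forms of degree `n - 1` to forms of degree `n`, acting on row
vectors of coefficients in the monomials `x ^ (n - 1 - p) * y ^ p` and `x ^ (n - q) * y ^ q`. -/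
def mulX : Matrix (Fin n) (Fin (n + 1)) R :=
  (1 : Matrix (Fin (n + 1)) (Fin (n + 1)) R).submatrix Fin.castSucc id

variable (R n) in
/-- Multiplication by `y`, with the conventions of `mulX`. -/
def mulY : Matrix (Fin n) (Fin (n + 1)) R :=
  (1 : Matrix (Fin (n + 1)) (Fin (n + 1)) R).submatrix Fin.succ id

section Products

variable {k : Type*}

@[simp]
theorem mulX_mul_apply (M : Matrix (Fin (n + 1)) k R) (p : Fin n) (x : k) :
    (mulX R n * M) p x = M p.castSucc x := by
  simp [mul_apply, mulX, one_apply]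

@[simp]
theorem mulY_mul_apply (M : Matrix (Fin (n + 1)) k R) (p : Fin n) (x : k) :
    (mulY R n * M) p x = M p.succ x := by
  simp [mul_apply, mulY, one_apply]

@[simp]
theorem mul_mulX_castSucc (M : Matrix k (Fin n) R) (x : k) (q : Fin n) :
    (M * mulX R n) x q.castSucc = M x q := by
  simp [mul_apply, mulX, one_apply]

@[simp]
theorem mul_mulX_last (M : Matrix k (Fin n) R) (x : k) :
    (M * mulX R n) x (Fin.last n) = 0 := by
  simp [mul_apply, mulX, one_apply, Fin.castSucc_ne_last]

@[simp]
theorem mul_mulY_succ (M : Matrix k (Fin n) R) (x : k) (q : Fin n) :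
    (M * mulY R n) x q.succ = M x q := by
  simp [mul_apply, mulY, one_apply]

@[simp]
theorem mul_mulY_zero (M : Matrix k (Fin n) R) (x : k) : (M * mulY R n) x 0 = 0 := by
  simp [mul_apply, mulY, one_apply]

end Products

/-- The derivation `x ↦ M₀₀ x + M₀₁ y`, `y ↦ M₁₀ x + M₁₁ y` on binary forms of degree `n - 1`,
with the conventions of `mulX`. -/
def formDerivation (n : ℕ) (M : Matrix (Fin 2) (Fin 2) R) : Matrix (Fin n) (Fin n) R :=
  of fun p q =>
    (if q = p then (p.rev : ℕ) * M 0 0 + (p : ℕ) * M 1 1 else 0) +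
    (if (q : ℕ) = p + 1 then (p.rev : ℕ) * M 0 1 else 0) +
    (if (p : ℕ) = q + 1 then (p : ℕ) * M 1 0 else 0)

theorem formDerivation_leibniz_mulX (M : Matrix (Fin 2) (Fin 2) R) :
    mulX R n * formDerivation (n + 1) M - formDerivation n M * mulX R n =
      M 0 0 • mulX R n + M 0 1 • mulY R n := by
  ext p q
  rw [Matrix.sub_apply, Matrix.add_apply, Matrix.smul_apply, Matrix.smul_apply, mulX_mul_apply]
  induction q using Fin.lastCases with
  | last =>
    rw [mul_mulX_last]
    simp only [formDerivation, of_apply, mulX, mulY, submatrix_apply, one_apply, id, Fin.ext_iff,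
      Fin.val_castSucc, Fin.val_succ, Fin.val_last, Fin.val_rev, smul_eq_mul]
    split_ifs <;> first
      | omega
      | rw [show n + 1 - ((p : ℕ) + 1) = 1 by omega]; simp
      | simp
  | cast q =>
    rw [mul_mulX_castSucc]
    simp only [formDerivation, of_apply, mulX, mulY, submatrix_apply, one_apply, id, Fin.ext_iff,
      Fin.rev_castSucc, Fin.val_castSucc, Fin.val_succ, Nat.cast_add, Nat.cast_one, smul_eq_mul]
    split_ifs <;> first | omega | ring

theorem formDerivation_leibniz_mulY (M : Matrix (Fin 2) (Fin 2) R) :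
    mulY R n * formDerivation (n + 1) M - formDerivation n M * mulY R n =
      M 1 0 • mulX R n + M 1 1 • mulY R n := by
  ext p q
  rw [Matrix.sub_apply, Matrix.add_apply, Matrix.smul_apply, Matrix.smul_apply, mulY_mul_apply]
  induction q using Fin.cases with
  | zero =>
    rw [mul_mulY_zero]
    simp only [formDerivation, of_apply, mulX, mulY, submatrix_apply, one_apply, id, Fin.ext_iff,
      Fin.val_castSucc, Fin.val_succ, Fin.val_zero, smul_eq_mul]
    by_cases hp : (p : ℕ) = 0 <;> simp [hp]
  | succ q =>
    rw [mul_mulY_succ]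
    simp only [formDerivation, of_apply, mulX, mulY, submatrix_apply, one_apply, id, Fin.ext_iff,
      Fin.rev_succ, Fin.val_castSucc, Fin.val_succ, Nat.cast_add, Nat.cast_one, smul_eq_mul,
      Nat.add_right_cancel_iff]
    split_ifs <;> first | omega | ring

theorem exists_scalar_of_intertwines {S : Matrix (Fin n) (Fin n) R}
    {T : Matrix (Fin (n + 1)) (Fin (n + 1)) R} (hX : S * mulX R n + mulX R n * T = 0)
    (hY : S * mulY R n + mulY R n * T = 0) : ∃ c : R, S = -(c • 1) ∧ T = c • 1 := by
  have hSX (p q : Fin n) : S p q = -T p.castSucc q.castSucc := by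
    simpa [add_eq_zero_iff_eq_neg] using congr_fun₂ hX p q.castSucc
  have hSY (p q : Fin n) : S p q = -T p.succ q.succ := by
    simpa [add_eq_zero_iff_eq_neg] using congr_fun₂ hY p q.succ
  have hT : T = T 0 0 • 1 := by
    refine eq_smul_one_of_toeplitz (fun p q => ?_) (fun p => ?_) (fun p => ?_)
    · rw [← neg_inj, ← hSX, ← hSY]
    · simpa using congr_fun₂ hX p (Fin.last n)
    · simpa using congr_fun₂ hY p 0
  refine ⟨T 0 0, ?_, hT⟩
  ext p q
  rw [hSX, hT]
  simp [one_apply]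

theorem eq_zero_of_transpose_mul_add_eq_zero {Q Q' : Matrix (Fin n) (Fin (n + 1)) R}
    (hX : Q'ᵀ * mulX R n + (Qᵀ * mulX R n)ᵀ = 0) (hY : Q'ᵀ * mulY R n + (Qᵀ * mulY R n)ᵀ = 0) :
    Q = 0 := by
  have hzero (p : Fin n) : Q p 0 = 0 := by
    simpa [-transpose_mul] using congr_fun₂ hY p.succ 0
  have hlast (p : Fin n) : Q' p (Fin.last n) = 0 := by
    simpa [-transpose_mul] using congr_fun₂ hX (Fin.last n) p.castSucc
  have hcast (p q : Fin n) : Q' q p.castSucc = -Q p q.castSucc := by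
    simpa [-transpose_mul, add_eq_zero_iff_eq_neg] using congr_fun₂ hX p.castSucc q.castSucc
  have hsucc (p q : Fin n) : Q' q p.succ = -Q p q.succ := by
    simpa [-transpose_mul, add_eq_zero_iff_eq_neg] using congr_fun₂ hY p.succ q.succ
  -- Together `hX` and `hY` make `Q` constant along antidiagonals, with zero boundary values.
  have column_eq_zero (q : Fin (n + 1)) : ∀ p, Q p q = 0 := by
    induction q using Fin.induction with
    | zero => exact hzero
    | succ q ih =>
      intro p
      rw [← neg_eq_zero, ← hsucc]
      obtain ⟨p', hp'⟩ | hp := Fin.eq_castSucc_or_eq_last p.succ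
      · rw [hp', hcast, ih, neg_zero]
      · rw [hp, hlast]
  ext p q
  exact column_eq_zero q p

theorem exists_hankel_of_transpose_mul_add_eq_zero {P P' : Matrix (Fin (n + 1)) (Fin n) R}
    (hX : (mulX R n * P')ᵀ + mulX R n * P = 0) (hY : (mulY R n * P')ᵀ + mulY R n * P = 0) :
    ∃ f, P = hankel f ∧ P' = -hankel f := by
  have hcast (q p : Fin n) : P' q.castSucc p = -P p.castSucc q := by
    simpa [-transpose_mul, add_eq_zero_iff_eq_neg] using congr_fun₂ hX p q
  have hsucc (q p : Fin n) : P' q.succ p = -P p.succ q := by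
    simpa [-transpose_mul, add_eq_zero_iff_eq_neg] using congr_fun₂ hY p q
  obtain ⟨f, rfl⟩ := exists_eq_hankel (M := P) fun q p hq hp => by
    rw [← neg_inj]
    exact (hsucc ⟨p, by omega⟩ ⟨q, hq⟩).symm.trans (hcast ⟨p + 1, hp⟩ ⟨q, hq⟩)
  refine ⟨f, rfl, ?_⟩
  ext q p
  cases n with
  | zero => exact p.elim0
  | succ n =>
    induction q using Fin.cases with
    | zero => simpa [hankel, add_comm] using hcast 0 p
    | succ q => simpa [hankel, add_comm, add_left_comm] using hsucc q p

end BinaryForms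

section OffDiag

variable {R m n : Type*} [CommSemiring R]

/-- The Gram matrix of the symmetric bilinear form on `Rᵐ ⊕ Rⁿ` given by the pairing `C` between
the two summands, which are isotropic. -/
def offDiag (C : Matrix m n R) : Matrix (m ⊕ n) (m ⊕ n) R :=
  fromBlocks 0 C Cᵀ 0

theorem transpose_fromBlocks_mul_offDiag_add [Fintype m] [Fintype n] (C : Matrix m n R)
    (P P' : Matrix m m R) (Q Q' : Matrix m n R) (S S' : Matrix n m R) (T T' : Matrix n n R) :
    (fromBlocks P' Q' S' T')ᵀ * offDiag C + offDiag C * fromBlocks P Q S T =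
      fromBlocks ((C * S')ᵀ + C * S) (P'ᵀ * C + C * T) ((Pᵀ * C + C * T')ᵀ)
        (Q'ᵀ * C + (Qᵀ * C)ᵀ) := by
  simp [offDiag, fromBlocks_transpose, fromBlocks_multiply, fromBlocks_add, add_comm]

end OffDiag

section IsometryBlock

variable {R : Type*} [CommRing R] {n : ℕ}

/-- The shape of the `(i, j)` block of an element of the isometry algebra of several copies of the
pencil spanned by `offDiag (mulX R n)` and `offDiag (mulY R n)`; the `(j, i)` block is then
`isometryBlock b a (-f)`. -/
def isometryBlock (a b : R) (f : Fin (2 * n) → R) :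
    Matrix (Fin n ⊕ Fin (n + 1)) (Fin n ⊕ Fin (n + 1)) R :=
  fromBlocks (-(b • 1)) 0 (hankel f) (a • 1)

theorem eq_and_eq_of_isometryBlock_eq {a a' b b' : R} {f f' : Fin (2 * n) → R}
    (h : isometryBlock a b f = isometryBlock a' b' f') : a = a' ∧ f = f' := by
  obtain ⟨-, -, hf, ha⟩ := fromBlocks_inj.1 h
  exact ⟨by simpa using congr_fun₂ ha 0 0, hankel_injective hf⟩

theorem isSymm_mulX_mul_hankel (f : Fin (2 * n) → R) : (mulX R n * hankel f).IsSymm := by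
  ext p q
  simp [hankel, -transpose_mul, add_comm]

theorem isSymm_mulY_mul_hankel (f : Fin (2 * n) → R) : (mulY R n * hankel f).IsSymm := by
  ext p q
  simp [hankel, -transpose_mul, add_comm, add_left_comm]

theorem isometryBlock_isometric {C : Matrix (Fin n) (Fin (n + 1)) R} {f : Fin (2 * n) → R}
    (hC : (C * hankel f).IsSymm) (a b : R) :
    (isometryBlock b a (-f))ᵀ * offDiag C + offDiag C * isometryBlock a b f = 0 := by
  rw [isometryBlock, isometryBlock, transpose_fromBlocks_mul_offDiag_add, hankel_neg,
    Matrix.mul_neg, transpose_neg, hC.eq]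
  simp

theorem isometric_pair_iff {U V : Matrix (Fin n ⊕ Fin (n + 1)) (Fin n ⊕ Fin (n + 1)) R} :
    Vᵀ * offDiag (mulX R n) + offDiag (mulX R n) * U = 0 ∧
        Vᵀ * offDiag (mulY R n) + offDiag (mulY R n) * U = 0 ↔
      ∃ a b f, U = isometryBlock a b f ∧ V = isometryBlock b a (-f) := by
  constructor
  · rintro ⟨hX, hY⟩
    rw [← fromBlocks_toBlocks U, ← fromBlocks_toBlocks V, transpose_fromBlocks_mul_offDiag_add,
      ← fromBlocks_zero, fromBlocks_inj] at hX hY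
    obtain ⟨hX₁₁, hX₁₂, hX₂₁, hX₂₂⟩ := hX
    obtain ⟨hY₁₁, hY₁₂, hY₂₁, hY₂₂⟩ := hY
    obtain ⟨a, hV₁₁, hU₂₂⟩ := exists_scalar_of_intertwines hX₁₂ hY₁₂
    obtain ⟨b, hU₁₁, hV₂₂⟩ := exists_scalar_of_intertwines
      (transpose_eq_zero.1 hX₂₁) (transpose_eq_zero.1 hY₂₁)
    obtain ⟨f, hU₂₁, hV₂₁⟩ := exists_hankel_of_transpose_mul_add_eq_zero hX₁₁ hY₁₁
    have hU₁₂ := eq_zero_of_transpose_mul_add_eq_zero hX₂₂ hY₂₂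
    have hV₁₂ := eq_zero_of_transpose_mul_add_eq_zero (Q := V.toBlocks₁₂) (Q' := U.toBlocks₁₂)
      (by simpa [add_comm] using congrArg transpose hX₂₂)
      (by simpa [add_comm] using congrArg transpose hY₂₂)
    refine ⟨a, b, f, ?_, ?_⟩
    · rw [← fromBlocks_toBlocks U, ← transpose_transpose U.toBlocks₁₁, hU₁₁, hU₁₂, hU₂₁, hU₂₂]
      simp [isometryBlock]
    · rw [← fromBlocks_toBlocks V, ← transpose_transpose V.toBlocks₁₁, hV₁₁, hV₁₂, hV₂₁, hV₂₂]
      simp [isometryBlock, hankel_neg]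
  · rintro ⟨a, b, f, rfl, rfl⟩
    exact ⟨isometryBlock_isometric (isSymm_mulX_mul_hankel f) a b,
      isometryBlock_isometric (isSymm_mulY_mul_hankel f) a b⟩

end IsometryBlock

section Copies

variable {ι k : Type*} [Fintype ι] [DecidableEq ι] [Fintype k]

theorem congrDeriv_blockDiagonal_apply (A : Matrix k k ℂ) (X : Matrix (k × ι) (k × ι) ℂ)
    (i j : ι) :
    (congrDeriv (blockDiagonal fun _ : ι => A) X).submatrix (·, i) (·, j) =
      (X.submatrix (·, j) (·, i))ᵀ * A + A * X.submatrix (·, i) (·, j) := by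
  ext p q
  simp [congrDeriv, mul_apply, blockDiagonal_apply, Fintype.sum_prod_type]

theorem congrDeriv_blockDiagonal_eq_zero_iff {A : Matrix k k ℂ} {X : Matrix (k × ι) (k × ι) ℂ} :
    congrDeriv (blockDiagonal fun _ : ι => A) X = 0 ↔
      ∀ i j, (X.submatrix (·, j) (·, i))ᵀ * A + A * X.submatrix (·, i) (·, j) = 0 := by
  simp only [← congrDeriv_blockDiagonal_apply, ← Matrix.ext_iff, Prod.forall]
  exact ⟨fun h i j p q => h p i q j, fun h p i q j => h i j p q⟩

theorem congrDeriv_blockDiagonal_blockDiagonal (A D : Matrix k k ℂ) :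
    congrDeriv (blockDiagonal fun _ : ι => A) (blockDiagonal fun _ => D) =
      blockDiagonal fun _ => congrDeriv A D := by
  simp only [congrDeriv, LinearMap.coe_mk, AddHom.coe_mk, blockDiagonal_transpose,
    ← blockDiagonal_mul, ← blockDiagonal_add, Pi.add_def]

end Copies

section FormPencil

variable {ι R m k : Type*} [DecidableEq ι] [CommRing R] {n : ℕ}

variable (ι) in
/-- The orthogonal sum of copies, indexed by `ι`, of the form `offDiag C`. For `C = mulX ℂ r` and
`C = mulY ℂ r` these are, up to the order of the basis, the canonical matrices `𝒜` and `ℬ` of the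
partition `(r, …, r)`. -/
def offDiagCopies (C : Matrix m k R) : Matrix ((m ⊕ k) × ι) ((m ⊕ k) × ι) R :=
  blockDiagonal fun _ => offDiag C

theorem offDiagCopies_smul_add_smul (a b : R) (C D : Matrix m k R) :
    offDiagCopies ι (a • C + b • D) = a • offDiagCopies ι C + b • offDiagCopies ι D := by
  ext ⟨p | p, i⟩ ⟨q | q, j⟩ <;> by_cases hij : i = j <;>
    simp [offDiagCopies, offDiag, blockDiagonal_apply, hij]

theorem linearIndependent_offDiagCopies [Nonempty ι] [NeZero n] :
    LinearIndependent R ![offDiagCopies ι (mulX R n), offDiagCopies ι (mulY R n)] := by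
  rw [LinearIndependent.pair_iff]
  intro a b h
  obtain ⟨i⟩ := ‹Nonempty ι›
  have hX := congr_fun₂ h (.inl 0, i) (.inr (Fin.castSucc 0), i)
  have hY := congr_fun₂ h (.inl 0, i) (.inr (Fin.succ 0), i)
  rw [← offDiagCopies_smul_add_smul] at hX hY
  constructor
  · simpa [offDiagCopies, offDiag, mulX, mulY, one_apply, Fin.ext_iff] using hX
  · simpa [offDiagCopies, offDiag, mulX, mulY, one_apply, Fin.ext_iff] using hY

variable (n) in
/-- The lift to `Rⁿ ⊕ Rⁿ⁺¹` of the derivation `M` of binary forms, acting contragrediently on the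
first summand. -/
def formLift (M : Matrix (Fin 2) (Fin 2) R) :
    Matrix (Fin n ⊕ Fin (n + 1)) (Fin n ⊕ Fin (n + 1)) R :=
  fromBlocks (-(formDerivation n M)ᵀ) 0 0 (formDerivation (n + 1) M)

theorem congrDeriv_offDiagCopies_formLift [Fintype ι] (M : Matrix (Fin 2) (Fin 2) ℂ)
    (C : Matrix (Fin n) (Fin (n + 1)) ℂ) :
    congrDeriv (offDiagCopies ι C) (blockDiagonal fun _ => formLift n M) =
      offDiagCopies ι (C * formDerivation (n + 1) M - formDerivation n M * C) := by
  have hlift : congrDeriv (offDiag C) (formLift n M) =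
      offDiag (C * formDerivation (n + 1) M - formDerivation n M * C) := by
    refine (transpose_fromBlocks_mul_offDiag_add C _ _ _ _ _ _ _ _).trans ?_
    simp [offDiag, sub_eq_neg_add]
  rw [offDiagCopies, congrDeriv_blockDiagonal_blockDiagonal, hlift, offDiagCopies]

/-- The isometries of the pencil of `offDiagCopies`: `w.1` collects the scalars and `w.2` the Hankel
sequences of the blocks, the latter being skew in the block indices. -/
def isometryMap [Fintype ι] :
    Matrix ι ι R × (Fin (2 * n) → LieAlgebra.Orthogonal.so ι R) →ₗ[R]
      Matrix ((Fin n ⊕ Fin (n + 1)) × ι) ((Fin n ⊕ Fin (n + 1)) × ι) R where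
  toFun w := of fun u v =>
    isometryBlock (w.1 u.2 v.2) (w.1 v.2 u.2) (fun l => (w.2 l).1 u.2 v.2) u.1 v.1
  map_add' w w' := by
    ext ⟨p | p, i⟩ ⟨q | q, j⟩ <;> simp [isometryBlock, hankel, add_mul, add_comm]
  map_smul' c w := by
    ext ⟨p | p, i⟩ ⟨q | q, j⟩ <;> simp [isometryBlock, hankel, mul_assoc]

theorem isometryMap_submatrix [Fintype ι]
    (w : Matrix ι ι R × (Fin (2 * n) → LieAlgebra.Orthogonal.so ι R)) (i j : ι) :
    (isometryMap w).submatrix (·, i) (·, j) =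
      isometryBlock (w.1 i j) (w.1 j i) fun l => (w.2 l).1 i j :=
  rfl

theorem isometryMap_injective [Fintype ι] :
    Function.Injective (isometryMap (ι := ι) (R := R) (n := n)) := by
  intro w w' h
  have hblock (i j : ι) := eq_and_eq_of_isometryBlock_eq
    ((isometryMap_submatrix w i j).symm.trans
      ((congrArg (·.submatrix (·, i) (·, j)) h).trans (isometryMap_submatrix w' i j)))
  refine Prod.ext ?_ ?_
  · ext i j
    exact (hblock i j).1
  · ext l i j
    exact congrFun (hblock i j).2 l

theorem range_isometryMap [Fintype ι] :
    LinearMap.range (isometryMap (ι := ι) (R := ℂ) (n := n)) =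
      isometryAlg (offDiagCopies ι (mulX ℂ n)) (offDiagCopies ι (mulY ℂ n)) := by
  ext X
  rw [mem_isometryAlg, offDiagCopies, offDiagCopies, congrDeriv_blockDiagonal_eq_zero_iff,
    congrDeriv_blockDiagonal_eq_zero_iff]
  simp only [← forall_and, isometric_pair_iff]
  constructor
  · rintro ⟨w, rfl⟩ i j
    refine ⟨_, _, _, isometryMap_submatrix w i j, ?_⟩
    rw [isometryMap_submatrix]
    congr 1
    ext l
    exact congr_fun₂ ((LieAlgebra.Orthogonal.mem_so ι ℂ _).1 (w.2 l).2) i j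
  · intro h
    choose a b f hX hX' using h
    have hpair (i j : ι) := eq_and_eq_of_isometryBlock_eq ((hX j i).symm.trans (hX' i j))
    have hskew (l : Fin (2 * n)) :
        (of fun i j => f i j l : Matrix ι ι ℂ) ∈ LieAlgebra.Orthogonal.so ι ℂ := by
      rw [LieAlgebra.Orthogonal.mem_so]
      ext i j
      exact congrFun (hpair i j).2 l
    refine ⟨(of a, fun l => ⟨_, hskew l⟩), ?_⟩
    ext ⟨p, i⟩ ⟨q, j⟩
    have hb : a j i = b i j := (hpair i j).1
    refine Eq.trans ?_ (congr_fun₂ (hX i j) p q).symm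
    rw [← hb]
    rfl

theorem finrank_isometryAlg_offDiagCopies (ι : Type*) [Fintype ι] [LinearOrder ι] (n : ℕ) :
    Module.finrank ℂ (isometryAlg (offDiagCopies ι (mulX ℂ n)) (offDiagCopies ι (mulY ℂ n))) =
      Fintype.card ι ^ 2 + 2 * n * (Fintype.card ι).choose 2 := by
  rw [← range_isometryMap, LinearMap.finrank_range_of_inj isometryMap_injective,
    Module.finrank_prod, Module.finrank_matrix, Module.finrank_pi_fintype]
  simp [finrank_so, sq]

theorem finrank_stabAlg_offDiagCopies (ι : Type*) [Fintype ι] [LinearOrder ι] [Nonempty ι] (n : ℕ)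
    [NeZero n] :
    Module.finrank ℂ (stabAlg (offDiagCopies ι (mulX ℂ n)) (offDiagCopies ι (mulY ℂ n))) =
      Fintype.card ι ^ 2 + 2 * n * (Fintype.card ι).choose 2 + 4 := by
  rw [finrank_stabAlg_of_full_action linearIndependent_offDiagCopies,
    finrank_isometryAlg_offDiagCopies]
  intro M
  refine ⟨blockDiagonal fun _ => formLift n M, ?_, ?_⟩
  · rw [congrDeriv_offDiagCopies_formLift, formDerivation_leibniz_mulX,
      offDiagCopies_smul_add_smul]
  · rw [congrDeriv_offDiagCopies_formLift, formDerivation_leibniz_mulY,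
      offDiagCopies_smul_add_smul]

end FormPencil

section CanonicalPencil

variable (h s : ℕ)

/-- The splitting of each block of indices of the canonical pencil of `(s, …, s)` into the first `s`
and the last `s + 1`. -/
def balancedIdxEquiv : (Fin s ⊕ Fin (s + 1)) × Fin h ≃ PencilIdx h fun _ => s :=
  ((finSumFinEquiv.trans (finCongr (by omega))).prodCongr (Equiv.refl _)).trans
    ((Equiv.prodComm _ _).trans (Equiv.sigmaEquivProd _ _).symm)

theorem balancedIdxEquiv_inl (p : Fin s) (i : Fin h) :
    balancedIdxEquiv h s (.inl p, i) = ⟨i, p, by lia⟩ :=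
  rfl

theorem balancedIdxEquiv_inr (p : Fin (s + 1)) (i : Fin h) :
    balancedIdxEquiv h s (.inr p, i) = ⟨i, s + p, by lia⟩ :=
  rfl

theorem canA_submatrix_balancedIdxEquiv :
    (canA h fun _ => s).submatrix (balancedIdxEquiv h s) (balancedIdxEquiv h s) =
      offDiagCopies (Fin h) (mulX ℂ s) := by
  ext ⟨p | p, i⟩ ⟨q | q, j⟩ <;>
    simp only [submatrix_apply, balancedIdxEquiv_inl, balancedIdxEquiv_inr, canA, of_apply,
      offDiagCopies, blockDiagonal_apply, offDiag, fromBlocks_apply₁₁, fromBlocks_apply₁₂,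
      fromBlocks_apply₂₁, fromBlocks_apply₂₂, transpose_apply, Matrix.zero_apply, mulX, one_apply,
      id, Fin.ext_iff, Fin.val_castSucc] <;>
    split_ifs <;> first | rfl | omega

theorem canB_submatrix_balancedIdxEquiv :
    (canB h fun _ => s).submatrix (balancedIdxEquiv h s) (balancedIdxEquiv h s) =
      offDiagCopies (Fin h) (mulY ℂ s) := by
  ext ⟨p | p, i⟩ ⟨q | q, j⟩ <;>
    simp only [submatrix_apply, balancedIdxEquiv_inl, balancedIdxEquiv_inr, canB, of_apply,
      offDiagCopies, blockDiagonal_apply, offDiag, fromBlocks_apply₁₁, fromBlocks_apply₁₂,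
      fromBlocks_apply₂₁, fromBlocks_apply₂₂, transpose_apply, Matrix.zero_apply, mulY, one_apply,
      id, Fin.ext_iff, Fin.val_succ] <;>
    split_ifs <;> first | rfl | omega

end CanonicalPencil

theorem two_parts_balanced_stabilizer_dim_general (h s : ℕ) (hh : 1 ≤ h) (hs : 1 ≤ s) :
    Module.finrank ℂ (stabAlg (canA h fun _ => s) (canB h fun _ => s)) =
      h ^ 2 + 2 * s * h.choose 2 + 4 := by
  have : NeZero h := ⟨by omega⟩
  have : NeZero s := ⟨by omega⟩
  rw [← finrank_stabAlg_submatrix (balancedIdxEquiv h s), canA_submatrix_balancedIdxEquiv,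
    canB_submatrix_balancedIdxEquiv, finrank_stabAlg_offDiagCopies, Fintype.card_fin]

/-- For the balanced partition `(s, s)` of `r = 2s`, the Lie algebra
of the stabilizer of the canonical pencil of size `2r + 2` has dimension
`2s + 8 = r + 8` over ℂ. -/
theorem two_parts_balanced_stabilizer_dim (s : ℕ) (hs : 1 ≤ s) :
    Module.finrank ℂ (stabAlg (canA 2 ![s, s]) (canB 2 ![s, s])) = 2 * s + 8 := by
  rw [show ![s, s] = fun _ => s by ext i; fin_cases i <;> rfl,
    two_parts_balanced_stabilizer_dim_general 2 s le_add_self hs, Nat.choose_self]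
  omega
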